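/- Let α ∈ (0,2) and for k ≥ 1 let g_k(s) = c_k|s|^{−k−α} on ℝ^k be normalized so that ∫_{ℝ^k}(1 − cos⟨s,x⟩) g_k(s) ds = |x|^α for all x ∈ ℝ^k. Define D_α(X,Y) = Σ_{k=1}^∞ (e^{-1}/k!) ∫_{[0,1]^k} ∫_{ℝ^{2k}} |φ_{X,Y}(x_k; s_k, t_k) − φ_X(x_k; s_k)φ_Y(x_k; t_k)|² g_k(s_k) g_k(t_k) ds_k dt_k dx_k ∈ [0,∞]. Then D_α(X,Y) = 0 if and only if the joint law of (X,Y) on C([0,1],ℝ) × C([0,1],ℝ) equals the product of the law of X and the law of Y. -/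

import Mathlib

open MeasureTheory
open scoped unitInterval ENNReal

/-- The joint characteristic function of the finite-dimensional distribution of the pair
of processes `(X, Y)` at the points `x 0, …, x (k-1)` of `[0,1]`. -/
noncomputable def jointCF {Ω : Type*} [MeasurableSpace Ω] (ℙ : Measure Ω)
    (X Y : Ω → C(I, ℝ)) {k : ℕ} (x : Fin k → I) (s t : Fin k → ℝ) : ℂ :=
  ∫ ω, Complex.exp (Complex.I * ((∑ j, (s j * X ω (x j) + t j * Y ω (x j)) : ℝ) : ℂ)) ∂ℙ

/-- The characteristic function of the finite-dimensional distribution of the process `X`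
at the points `x 0, …, x (k-1)` of `[0,1]`. -/
noncomputable def margCF {Ω : Type*} [MeasurableSpace Ω] (ℙ : Measure Ω)
    (X : Ω → C(I, ℝ)) {k : ℕ} (x : Fin k → I) (s : Fin k → ℝ) : ℂ :=
  ∫ ω, Complex.exp (Complex.I * ((∑ j, s j * X ω (x j) : ℝ) : ℂ)) ∂ℙ

/-- The weight function `g_k(s) = c |s|^{−k−α}` on `ℝ^k`, where `|s|` is the Euclidean
norm, written via `|s|^{−k−α} = (Σ_j s_j²)^{(−k−α)/2}`. -/
noncomputable def gWeight (α : ℝ) (k : ℕ) (c : ℝ) (s : Fin k → ℝ) : ℝ :=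
  c * (∑ j, s j ^ 2) ^ ((-((k : ℝ) + α)) / 2)

/-- The `α`-th power `|f(x) − h(x)|^α = (Σ_j (f(x_j) − h(x_j))²)^{α/2}` of the Euclidean
distance between the vectors of values of `f` and `h` at the points `x 0, …, x (k-1)`. -/
noncomputable def eDistPow (α : ℝ) {k : ℕ} (f h : C(I, ℝ)) (x : Fin k → I) : ℝ :=
  (∑ j, (f (x j) - h (x j)) ^ 2) ^ (α / 2)

/-- The `α`-distance covariance `D_α(X,Y)` of two processes with continuous paths on
`[0,1]`, with the (non-integrable) weights `g_k(s) = c_k |s|^{−k−α}`: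
`D_α(X,Y) = Σ_{k≥1} (e^{-1}/k!) ∫_{[0,1]^k} ∫_{ℝ^{2k}} |φ_{X,Y} − φ_X φ_Y|² g_k(s)g_k(t) ds dt dx`. -/
noncomputable def distCovAlpha {Ω : Type*} [MeasurableSpace Ω] (ℙ : Measure Ω)
    (X Y : Ω → C(I, ℝ)) (α : ℝ) (c : ℕ → ℝ) : ℝ≥0∞ :=
  ∑' k : ℕ,
    ENNReal.ofReal (Real.exp (-1) / (Nat.factorial (k + 1) : ℝ)) *
      ∫⁻ (x : Fin (k + 1) → I),
        ∫⁻ (s : Fin (k + 1) → ℝ), ∫⁻ (t : Fin (k + 1) → ℝ),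
          ENNReal.ofReal
            (‖jointCF ℙ X Y x s t - margCF ℙ X x s * margCF ℙ Y x t‖ ^ 2 *
              (gWeight α (k + 1) (c (k + 1)) s * gWeight α (k + 1) (c (k + 1)) t))

/-!
Since `D_α(X, Y)` is a sum of integrals of nonnegative functions, it vanishes iff each integrand
vanishes almost everywhere. The weights are positive almost everywhere, the characteristic functions
are jointly continuous in `(x, s, t)`, and Lebesgue measure charges every nonempty open set, so this
means that `φ_{X,Y} = φ_X φ_Y` everywhere. By uniqueness of characteristic functions, that is
independence of all the finite-dimensional distributions of `X` from those of `Y`. A continuous path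
is determined by its values on a countable dense set, and by Lusin–Souslin the evaluations there
generate the Borel σ-algebra of `C([0,1], ℝ)`, so this is in turn independence of `X` and `Y`.
-/

open ProbabilityTheory (IndepFun IndepFun_iff_Indep indepFun_iff_charFun_prod
  indepFun_iff_map_prod_eq_prod_map_map)
open WithLp (ofLp toLp)

section OpenPos

lemma isOpenPosMeasure_comap_subtype_val {S : Type*} [TopologicalSpace S] [MeasurableSpace S]
    (μ : Measure S) [μ.IsOpenPosMeasure] {s : Set S} (hs : MeasurableSet s)
    (hcl : s ⊆ closure (interior s)) :
    (μ.comap ((↑) : s → S)).IsOpenPosMeasure where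
  open_pos U hU hne := by
    obtain ⟨V, hV, rfl⟩ := isOpen_induced_iff.1 hU
    obtain ⟨x, hx⟩ := hne
    have hmeet : (V ∩ interior s).Nonempty := mem_closure_iff.1 (hcl x.2) V hV hx
    rw [comap_subtype_coe_apply hs, Subtype.image_preimage_coe]
    refine ((hV.inter isOpen_interior).measure_pos μ hmeet |>.trans_le (measure_mono ?_)).ne'
    exact fun y hy ↦ ⟨interior_subset hy.2, hy.1⟩

instance : (volume : Measure I).IsOpenPosMeasure :=
  isOpenPosMeasure_comap_subtype_val volume measurableSet_Icc <| by
    rw [interior_Icc, closure_Ioo zero_ne_one]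

lemma lintegral_ofReal_norm_sq_mul_eq_zero_iff {S E : Type*} [TopologicalSpace S]
    [MeasurableSpace S] [OpensMeasurableSpace S] [NormedAddCommGroup E]
    {μ : Measure S} [μ.IsOpenPosMeasure] {f : S → E} (hf : Continuous f)
    {w : S → ℝ} (hw : AEMeasurable w μ) (hw_pos : ∀ᵐ a ∂μ, 0 < w a) :
    ∫⁻ a, ENNReal.ofReal (‖f a‖ ^ 2 * w a) ∂μ = 0 ↔ ∀ a, f a = 0 := by
  have hmeas : AEMeasurable (fun a ↦ ENNReal.ofReal (‖f a‖ ^ 2 * w a)) μ :=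
    ((hf.norm.pow 2).measurable.aemeasurable.mul hw).ennreal_ofReal
  have hzero_iff : ∀ᵐ a ∂μ, ENNReal.ofReal (‖f a‖ ^ 2 * w a) = 0 ↔ f a = 0 := by
    filter_upwards [hw_pos] with a ha
    rw [ENNReal.ofReal_mul (sq_nonneg _), mul_eq_zero, or_iff_left (by simpa using ha),
      ENNReal.ofReal_eq_zero, sq_nonpos_iff, norm_eq_zero]
  calc _ ↔ ∀ᵐ a ∂μ, ENNReal.ofReal (‖f a‖ ^ 2 * w a) = 0 := lintegral_eq_zero_iff' hmeas
    _ ↔ f =ᵐ[μ] fun _ ↦ 0 := Filter.eventually_congr hzero_iff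
    _ ↔ f = fun _ ↦ 0 := hf.ae_eq_iff_eq μ continuous_const
    _ ↔ ∀ a, f a = 0 := funext_iff

end OpenPos

section Independence

variable {Ω : Type*} [MeasurableSpace Ω] {ℙ : Measure Ω}

lemma indepFun_pi_iff_integral_cexp {ι κ : Type*} [Fintype ι] [Fintype κ] [IsFiniteMeasure ℙ]
    {U : Ω → ι → ℝ} {V : Ω → κ → ℝ} (hU : AEMeasurable U ℙ) (hV : AEMeasurable V ℙ) :
    IndepFun U V ℙ ↔ ∀ (s : ι → ℝ) (t : κ → ℝ),
      ∫ ω, Complex.exp (Complex.I * ((∑ i, s i * U ω i + ∑ j, t j * V ω j : ℝ) : ℂ)) ∂ℙ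
        = (∫ ω, Complex.exp (Complex.I * ((∑ i, s i * U ω i : ℝ) : ℂ)) ∂ℙ)
          * ∫ ω, Complex.exp (Complex.I * ((∑ j, t j * V ω j : ℝ) : ℂ)) ∂ℙ := by
  have hEuclid : IndepFun U V ℙ ↔ IndepFun (fun ω ↦ toLp 2 (U ω)) (fun ω ↦ toLp 2 (V ω)) ℙ :=
    ⟨fun h ↦ h.comp (φ := toLp 2) (ψ := toLp 2) (by fun_prop) (by fun_prop),
      fun h ↦ h.comp (φ := ofLp) (ψ := ofLp) (by fun_prop) (by fun_prop)⟩
  rw [hEuclid, indepFun_iff_charFun_prod (by fun_prop) (by fun_prop),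
    (WithLp.equiv 2 _).forall_congr_left, Prod.forall,
    (WithLp.equiv 2 (ι → ℝ)).forall_congr_left]
  refine forall_congr' fun s ↦ ?_
  rw [(WithLp.equiv 2 (κ → ℝ)).forall_congr_left]
  refine forall_congr' fun t ↦ ?_
  simp only [charFun_apply]
  rw [integral_map (by fun_prop) (Continuous.aestronglyMeasurable (by fun_prop)),
    integral_map (by fun_prop) (Continuous.aestronglyMeasurable (by fun_prop)),
    integral_map (by fun_prop) (Continuous.aestronglyMeasurable (by fun_prop))]
  simp [PiLp.inner_apply, mul_comm]

lemma indepFun_process_of_forall_tuple [IsZeroOrProbabilityMeasure ℙ] {T E F : Type*}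
    [MeasurableSpace E] [MeasurableSpace F] {X : T → Ω → E} {Y : T → Ω → F}
    (hX : ∀ t, AEMeasurable (X t) ℙ) (hY : ∀ t, AEMeasurable (Y t) ℙ)
    (h : ∀ (k : ℕ) (x : Fin k → T),
      IndepFun (fun ω i ↦ X (x i) ω) (fun ω i ↦ Y (x i) ω) ℙ) :
    IndepFun (fun ω t ↦ X t ω) (fun ω t ↦ Y t ω) ℙ := by
  classical
  refine IndepFun.process_indepFun_process₀ hX hY fun A B ↦ ?_
  let e := (A ∪ B).equivFin
  have hAB := (h _ fun i ↦ e.symm i).comp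
    (φ := fun v (a : A) ↦ v (e ⟨a, Finset.mem_union_left _ a.2⟩))
    (ψ := fun v (b : B) ↦ v (e ⟨b, Finset.mem_union_right _ b.2⟩))
    (by fun_prop) (by fun_prop)
  simpa [Function.comp_def] using hAB

lemma indepFun_comp_iff_of_measurableEmbedding {α β α' β' : Type*}
    [MeasurableSpace α] [MeasurableSpace β] [MeasurableSpace α'] [MeasurableSpace β']
    {X : Ω → α} {Y : Ω → β} {f : α → α'} {g : β → β'}
    (hf : MeasurableEmbedding f) (hg : MeasurableEmbedding g) :
    IndepFun (f ∘ X) (g ∘ Y) ℙ ↔ IndepFun X Y ℙ := by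
  rw [IndepFun_iff_Indep, IndepFun_iff_Indep, ← MeasurableSpace.comap_comp,
    ← MeasurableSpace.comap_comp, hf.comap_eq, hg.comap_eq]

section ContinuousPaths

lemma aemeasurable_eval {T E : Type*} [TopologicalSpace T] [TopologicalSpace E] [MeasurableSpace E]
    [BorelSpace E] [MeasurableSpace C(T, E)] [OpensMeasurableSpace C(T, E)]
    {X : Ω → C(T, E)} (hX : AEMeasurable X ℙ) (x : T) : AEMeasurable (fun ω ↦ X ω x) ℙ :=
  (continuous_eval_const x).measurable.comp_aemeasurable hX

variable {T E F : Type*} [TopologicalSpace T]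
  [TopologicalSpace E] [SecondCountableTopology E] [T2Space E] [MeasurableSpace E] [BorelSpace E]
  [PolishSpace C(T, E)] [MeasurableSpace C(T, E)] [BorelSpace C(T, E)]
  [TopologicalSpace F] [SecondCountableTopology F] [T2Space F] [MeasurableSpace F] [BorelSpace F]
  [PolishSpace C(T, F)] [MeasurableSpace C(T, F)] [BorelSpace C(T, F)]

lemma measurableEmbedding_eval_of_dense {D : Set T} [Countable D] (hD : Dense D) :
    MeasurableEmbedding fun (f : C(T, E)) (d : D) ↦ f d := by
  refine Continuous.measurableEmbedding (by fun_prop) fun f g hfg ↦ ?_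
  refine DFunLike.coe_injective (f.continuous.ext_on hD g.continuous fun d hd ↦ ?_)
  exact congrFun hfg ⟨d, hd⟩

lemma indepFun_iff_forall_indepFun_eval [TopologicalSpace.SeparableSpace T]
    [IsZeroOrProbabilityMeasure ℙ]
    {X : Ω → C(T, E)} {Y : Ω → C(T, F)} (hX : AEMeasurable X ℙ) (hY : AEMeasurable Y ℙ) :
    IndepFun X Y ℙ ↔ ∀ (k : ℕ) (x : Fin k → T),
      IndepFun (fun ω i ↦ X ω (x i)) (fun ω i ↦ Y ω (x i)) ℙ := by
  refine ⟨fun h k x ↦ h.comp (φ := fun f : C(T, E) ↦ fun i ↦ f (x i))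
    (ψ := fun f : C(T, F) ↦ fun i ↦ f (x i))
    (Continuous.measurable (by fun_prop)) (Continuous.measurable (by fun_prop)), fun h ↦ ?_⟩
  obtain ⟨D, hD_countable, hD_dense⟩ := TopologicalSpace.exists_countable_dense T
  have : Countable D := hD_countable
  rw [← indepFun_comp_iff_of_measurableEmbedding (measurableEmbedding_eval_of_dense hD_dense)
    (measurableEmbedding_eval_of_dense hD_dense)]
  exact indepFun_process_of_forall_tuple (T := D)
    (fun d ↦ aemeasurable_eval hX d) (fun d ↦ aemeasurable_eval hY d) fun k x ↦ h k fun i ↦ x i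

end ContinuousPaths

end Independence

section Weight

lemma measurable_gWeight (α : ℝ) (k : ℕ) (c : ℝ) : Measurable (gWeight α k c) := by
  unfold gWeight
  fun_prop

lemma gWeight_pos (α : ℝ) {k : ℕ} {c : ℝ} (hc : 0 < c) {s : Fin k → ℝ} (hs : s ≠ 0) :
    0 < gWeight α k c s := by
  obtain ⟨j, hj⟩ := Function.ne_iff.1 hs
  have hsum : 0 < ∑ i, s i ^ 2 :=
    Finset.sum_pos' (fun i _ ↦ sq_nonneg _) ⟨j, Finset.mem_univ _, sq_pos_of_ne_zero hj⟩
  exact mul_pos hc (Real.rpow_pos_of_pos hsum _)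

lemma ae_gWeight_pos (α : ℝ) {k : ℕ} [NeZero k] {c : ℝ} (hc : 0 < c) :
    ∀ᵐ s : Fin k → ℝ, 0 < gWeight α k c s :=
  (Measure.ae_ne volume 0).mono fun _ hs ↦ gWeight_pos α hc hs

lemma ae_gWeight_mul_gWeight_pos (α : ℝ) {k : ℕ} [NeZero k] {c : ℝ} (hc : 0 < c) :
    ∀ᵐ q : (Fin k → ℝ) × (Fin k → ℝ), 0 < gWeight α k c q.1 * gWeight α k c q.2 := by
  filter_upwards [Measure.quasiMeasurePreserving_fst.ae (ae_gWeight_pos α hc),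
    Measure.quasiMeasurePreserving_snd.ae (ae_gWeight_pos α hc)] with q h₁ h₂ using mul_pos h₁ h₂

end Weight

section DistanceCovariance

variable {Ω : Type*} [MeasurableSpace Ω] {ℙ : Measure Ω}

lemma continuous_integral_cexp_I_mul [IsFiniteMeasure ℙ] {P : Type*} [TopologicalSpace P]
    [FirstCountableTopology P] {φ : P → Ω → ℝ} (hφ : ∀ p, AEMeasurable (φ p) ℙ)
    (hφ_cont : ∀ ω, Continuous fun p ↦ φ p ω) :
    Continuous fun p ↦ ∫ ω, Complex.exp (Complex.I * (φ p ω : ℂ)) ∂ℙ := by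
  refine continuous_of_dominated (bound := fun _ ↦ 1) (fun p ↦ ?_) (fun p ↦ ?_)
    (integrable_const _) (.of_forall fun ω ↦ ?_)
  · have := hφ p
    exact AEMeasurable.aestronglyMeasurable (by fun_prop)
  · exact .of_forall fun ω ↦ (Complex.norm_exp_I_mul_ofReal _).le
  · have := hφ_cont ω
    fun_prop

variable [MeasurableSpace C(I, ℝ)] [BorelSpace C(I, ℝ)] {X Y : Ω → C(I, ℝ)}

lemma continuous_margCF [IsFiniteMeasure ℙ] (hX : AEMeasurable X ℙ) (k : ℕ) :
    Continuous fun p : (Fin k → I) × (Fin k → ℝ) ↦ margCF ℙ X p.1 p.2 := by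
  have := aemeasurable_eval hX
  exact continuous_integral_cexp_I_mul (fun p ↦ by fun_prop) fun ω ↦ by fun_prop

lemma continuous_jointCF [IsFiniteMeasure ℙ] (hX : AEMeasurable X ℙ) (hY : AEMeasurable Y ℙ)
    (k : ℕ) :
    Continuous fun p : (Fin k → I) × (Fin k → ℝ) × (Fin k → ℝ) ↦
      jointCF ℙ X Y p.1 p.2.1 p.2.2 := by
  have := aemeasurable_eval hX
  have := aemeasurable_eval hY
  exact continuous_integral_cexp_I_mul (fun p ↦ by fun_prop) fun ω ↦ by fun_prop

lemma indepFun_eval_iff_jointCF_eq_mul [IsFiniteMeasure ℙ] (hX : AEMeasurable X ℙ)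
    (hY : AEMeasurable Y ℙ) {k : ℕ} (x : Fin k → I) :
    IndepFun (fun ω i ↦ X ω (x i)) (fun ω i ↦ Y ω (x i)) ℙ ↔
      ∀ s t, jointCF ℙ X Y x s t = margCF ℙ X x s * margCF ℙ Y x t := by
  rw [indepFun_pi_iff_integral_cexp (aemeasurable_pi_lambda _ fun i ↦ aemeasurable_eval hX (x i))
    (aemeasurable_pi_lambda _ fun i ↦ aemeasurable_eval hY (x i))]
  simp only [jointCF, margCF, Finset.sum_add_distrib]

lemma lintegral_jointCF_sub_eq_zero_iff [IsFiniteMeasure ℙ] (hX : AEMeasurable X ℙ)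
    (hY : AEMeasurable Y ℙ) (α : ℝ) {k : ℕ} [NeZero k] {c : ℝ} (hc : 0 < c) :
    ∫⁻ (x : Fin k → I), ∫⁻ (s : Fin k → ℝ), ∫⁻ (t : Fin k → ℝ),
        ENNReal.ofReal (‖jointCF ℙ X Y x s t - margCF ℙ X x s * margCF ℙ Y x t‖ ^ 2 *
          (gWeight α k c s * gWeight α k c t)) = 0 ↔
      ∀ (x : Fin k → I) (s t : Fin k → ℝ),
        jointCF ℙ X Y x s t = margCF ℙ X x s * margCF ℙ Y x t := by
  let gap (p : (Fin k → I) × (Fin k → ℝ) × (Fin k → ℝ)) : ℂ :=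
    jointCF ℙ X Y p.1 p.2.1 p.2.2 - margCF ℙ X p.1 p.2.1 * margCF ℙ Y p.1 p.2.2
  let w (p : (Fin k → I) × (Fin k → ℝ) × (Fin k → ℝ)) : ℝ :=
    gWeight α k c p.2.1 * gWeight α k c p.2.2
  have hgap : Continuous gap := by
    have := continuous_jointCF hX hY k
    have := continuous_margCF hX k
    have := continuous_margCF hY k
    fun_prop
  have hw : Measurable w := by
    have := measurable_gWeight α k c
    fun_prop
  have hw_pos : ∀ᵐ p, 0 < w p :=
    Measure.quasiMeasurePreserving_snd.ae (ae_gWeight_mul_gWeight_pos α hc)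
  have hF : Measurable fun p ↦ ENNReal.ofReal (‖gap p‖ ^ 2 * w p) := by
    have := hgap.measurable
    fun_prop
  -- Found in one go, the instance on the product exceeds `synthInstance.maxSize`.
  have : (volume : Measure (Fin k → I)).IsOpenPosMeasure := inferInstance
  calc _ ↔ ∫⁻ p, ENNReal.ofReal (‖gap p‖ ^ 2 * w p) = 0 := by
        rw [Measure.volume_eq_prod, lintegral_prod _ hF.aemeasurable]
        refine iff_of_eq <| congrArg (· = 0) <| lintegral_congr fun x ↦ ?_
        have hFx : Measurable fun q ↦ ENNReal.ofReal (‖gap (x, q)‖ ^ 2 * w (x, q)) :=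
          hF.comp measurable_prodMk_left
        rw [Measure.volume_eq_prod, lintegral_prod _ hFx.aemeasurable]
    _ ↔ ∀ p, gap p = 0 := lintegral_ofReal_norm_sq_mul_eq_zero_iff hgap hw.aemeasurable hw_pos
    _ ↔ _ := by simp only [gap, Prod.forall, sub_eq_zero]

lemma distCovAlpha_eq_zero_iff_jointCF_eq_mul [IsProbabilityMeasure ℙ] (hX : AEMeasurable X ℙ)
    (hY : AEMeasurable Y ℙ) (α : ℝ) {c : ℕ → ℝ} (hc : ∀ k, 0 < c (k + 1)) :
    distCovAlpha ℙ X Y α c = 0 ↔ ∀ (k : ℕ) (x : Fin k → I) (s t : Fin k → ℝ),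
      jointCF ℙ X Y x s t = margCF ℙ X x s * margCF ℙ Y x t := by
  have hcoef (k : ℕ) : ENNReal.ofReal (Real.exp (-1) / ((k + 1).factorial : ℝ)) ≠ 0 := by
    rw [ENNReal.ofReal_ne_zero_iff]
    positivity
  have hzero (x : Fin 0 → I) (s t : Fin 0 → ℝ) :
      jointCF ℙ X Y x s t = margCF ℙ X x s * margCF ℙ Y x t := by simp [jointCF, margCF]
  rw [← Nat.and_forall_add_one, and_iff_right hzero, distCovAlpha, ENNReal.tsum_eq_zero]
  refine forall_congr' fun k ↦ ?_
  rw [mul_eq_zero, or_iff_right (hcoef k), lintegral_jointCF_sub_eq_zero_iff hX hY α (hc k)]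

end DistanceCovariance

theorem distCovAlpha_eq_zero_iff_indep_general
    {Ω : Type*} [MeasurableSpace Ω] (ℙ : Measure Ω) [IsProbabilityMeasure ℙ]
    [MeasurableSpace C(I, ℝ)] [BorelSpace C(I, ℝ)]
    (X Y : Ω → C(I, ℝ)) (hX : AEMeasurable X ℙ) (hY : AEMeasurable Y ℙ)
    (α : ℝ) (c : ℕ → ℝ) (hc : ∀ k, 0 < c (k + 1)) :
    distCovAlpha ℙ X Y α c = 0
      ↔ Measure.map (fun ω => (X ω, Y ω)) ℙ
          = (Measure.map X ℙ).prod (Measure.map Y ℙ) := by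
  rw [← indepFun_iff_map_prod_eq_prod_map_map hX hY, indepFun_iff_forall_indepFun_eval hX hY,
    distCovAlpha_eq_zero_iff_jointCF_eq_mul hX hY α hc]
  simp only [indepFun_eval_iff_jointCF_eq_mul hX hY]

/-- For `α ∈ (0,2)` and the weights `g_k(s) = c_k |s|^{−k−α}` normalized
so that `∫_{ℝ^k} (1 − cos⟨s,x⟩) g_k(s) ds = |x|^α`, the `α`-distance covariance
`D_α(X,Y)` vanishes iff the joint law of `(X,Y)` on `C([0,1],ℝ) × C([0,1],ℝ)` is the
product of the law of `X` and the law of `Y`. -/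
theorem distCovAlpha_eq_zero_iff_indep
    {Ω : Type*} [MeasurableSpace Ω] (ℙ : Measure Ω) [IsProbabilityMeasure ℙ]
    [MeasurableSpace C(I, ℝ)] [BorelSpace C(I, ℝ)]
    (X Y : Ω → C(I, ℝ)) (hX : Measurable X) (hY : Measurable Y)
    (α : ℝ) (hα : α ∈ Set.Ioo 0 2)
    (c : ℕ → ℝ) (hc_pos : ∀ k, 0 < c k)
    (hc_norm : ∀ k : ℕ, 1 ≤ k → ∀ x : Fin k → ℝ,
      (∫⁻ (s : Fin k → ℝ),
          ENNReal.ofReal ((1 - Real.cos (∑ j, s j * x j)) * gWeight α k (c k) s))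
        = ENNReal.ofReal ((∑ j, x j ^ 2) ^ (α / 2))) :
    distCovAlpha ℙ X Y α c = 0
      ↔ Measure.map (fun ω => (X ω, Y ω)) ℙ
          = (Measure.map X ℙ).prod (Measure.map Y ℙ) :=
  distCovAlpha_eq_zero_iff_indep_general ℙ X Y hX.aemeasurable hY.aemeasurable α c
    fun k ↦ hc_pos (k + 1)
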